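/- In any skew lattice S, for all a, b, b' ∈ S one has (a∧b∧a)∧(a∧b'∧a) = a∧b∧b'∧a. In particular, every image set {a∧b∧a : b ∈ B} is closed under ∧. -/

import Mathlib

/-!
Put `e = (a ∧ b) ∨ a` and `f = a ∨ (c ∧ a)`. By absorption `a ∧ b = (a ∧ b) ∧ e` and
`c ∧ a = f ∧ (c ∧ a)`, while `e` and `f` are related to `a` by Green's relations `R` and `L`
respectively. Since `f ∧ e` is idempotent, the Clifford–Miller argument gives `e ∧ f = a`, so that
`a ∧ b ∧ c ∧ a = (a ∧ b) ∧ (e ∧ f) ∧ (c ∧ a) = a ∧ b ∧ a ∧ c ∧ a`.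
-/

section Semigroup

variable {M : Type*} [Semigroup M] {a e f x y : M}

theorem mul_eq_of_isIdempotentElem_mul_swap (hae : a * e = e) (hea : e * a = a) (haf : a * f = a)
    (hfa : f * a = f) (hfe : IsIdempotentElem (f * e)) : e * f = a := by
  have he : a * (f * e) = e := by rw [← mul_assoc, haf, hae]
  calc e * f = a * (f * e) * (f * (e * a)) := by rw [he, hea, hfa]
    _ = a * (f * e * (f * e)) * a := by simp only [mul_assoc]
    _ = a := by rw [hfe.eq, he, hea]

theorem mul_mul_eq_mul_of_mul_eq (hef : e * f = a) (hx : x * e = x) (hy : f * y = y) :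
    x * a * y = x * y := by
  calc x * a * y = x * e * (f * y) := by simp only [← hef, mul_assoc]
    _ = x * y := by rw [hx, hy]

end Semigroup

/-- A skew lattice: a noncommutative lattice, with `⊓` for `∧` and `⊔` for `∨`. The class carries
no order; `⊓` and `⊔` come from the notation classes `Min` and `Max`. -/
class SkewLattice (S : Type*) extends Min S, Max S where
  protected inf_idem (x : S) : x ⊓ x = x
  protected sup_idem (x : S) : x ⊔ x = x
  protected inf_assoc (x y z : S) : x ⊓ y ⊓ z = x ⊓ (y ⊓ z)
  protected sup_assoc (x y z : S) : x ⊔ y ⊔ z = x ⊔ (y ⊔ z)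
  protected inf_sup_self (x y : S) : x ⊓ (x ⊔ y) = x
  protected sup_inf_right_self (x y : S) : (y ⊔ x) ⊓ x = x
  protected sup_inf_self (x y : S) : x ⊔ (x ⊓ y) = x
  protected inf_sup_right_self (x y : S) : (y ⊓ x) ⊔ x = x

namespace SkewLattice

variable {S : Type*} [SkewLattice S] {x y : S}

theorem inf_eq_left_of_sup_eq_right (h : x ⊔ y = y) : x ⊓ y = x := by
  rw [← h, SkewLattice.inf_sup_self]

theorem inf_eq_right_of_sup_eq_left (h : x ⊔ y = x) : x ⊓ y = y := by
  rw [← h, SkewLattice.sup_inf_right_self]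

theorem inf_inf_sup_self (a b : S) : a ⊓ (a ⊓ b ⊔ a) = a ⊓ b ⊔ a := by
  apply inf_eq_right_of_sup_eq_left
  rw [← SkewLattice.sup_assoc, SkewLattice.sup_inf_self, SkewLattice.sup_idem]

theorem sup_inf_self_inf (a c : S) : (a ⊔ c ⊓ a) ⊓ a = a ⊔ c ⊓ a := by
  apply inf_eq_left_of_sup_eq_right
  rw [SkewLattice.sup_assoc, SkewLattice.inf_sup_right_self, SkewLattice.sup_idem]

/-- The semigroup `(S, ∧)`. It is not an instance, since `S` may carry another multiplication. -/
abbrev infSemigroup (S : Type*) [SkewLattice S] : Semigroup S where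
  mul := (· ⊓ ·)
  mul_assoc := SkewLattice.inf_assoc

theorem inf_sup_inf_sup_inf_self (a b c : S) : (a ⊓ b ⊔ a) ⊓ (a ⊔ c ⊓ a) = a :=
  let _ := infSemigroup S
  mul_eq_of_isIdempotentElem_mul_swap (inf_inf_sup_self a b)
    (SkewLattice.sup_inf_right_self a (a ⊓ b)) (SkewLattice.inf_sup_self a (c ⊓ a))
    (sup_inf_self_inf a c) (SkewLattice.inf_idem _)

theorem inf_regular (a b c : S) : a ⊓ b ⊓ a ⊓ (c ⊓ a) = a ⊓ b ⊓ (c ⊓ a) :=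
  let _ := infSemigroup S
  mul_mul_eq_mul_of_mul_eq (inf_sup_inf_sup_inf_self a b c) (SkewLattice.inf_sup_self (a ⊓ b) a)
    (SkewLattice.sup_inf_right_self (c ⊓ a) a)

end SkewLattice

/-- Image sets are closed under ∧: (a∧b∧a)∧(a∧b'∧a) = a∧b∧b'∧a. -/
theorem imageSet_wedge_closed {S : Type*} (wedge vee : S → S → S)
    (wedge_idem : ∀ x : S, wedge x x = x)
    (vee_idem : ∀ x : S, vee x x = x)
    (wedge_assoc : ∀ x y z : S, wedge (wedge x y) z = wedge x (wedge y z))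
    (vee_assoc : ∀ x y z : S, vee (vee x y) z = vee x (vee y z))
    (abs₁ : ∀ x y : S, wedge x (vee x y) = x)
    (abs₂ : ∀ x y : S, wedge (vee y x) x = x)
    (abs₃ : ∀ x y : S, vee x (wedge x y) = x)
    (abs₄ : ∀ x y : S, vee (wedge y x) x = x) :
    ∀ a b b' : S,
      wedge (wedge (wedge a b) a) (wedge (wedge a b') a) = wedge (wedge (wedge a b) b') a := by
  intro a b b'
  let _ : SkewLattice S :=
    { min := wedge, max := vee
      inf_idem := wedge_idem, sup_idem := vee_idem
      inf_assoc := wedge_assoc, sup_assoc := vee_assoc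
      inf_sup_self := abs₁, sup_inf_right_self := abs₂
      sup_inf_self := abs₃, inf_sup_right_self := abs₄ }
  calc wedge (wedge (wedge a b) a) (wedge (wedge a b') a)
      = wedge (wedge (wedge a b) (wedge a a)) (wedge b' a) := by simp only [wedge_assoc]
    _ = wedge (wedge (wedge a b) a) (wedge b' a) := by rw [wedge_idem]
    _ = wedge (wedge a b) (wedge b' a) := SkewLattice.inf_regular a b b'
    _ = wedge (wedge (wedge a b) b') a := (wedge_assoc _ _ _).symm
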